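/- There exist universal constants c > 0 and n₀ such that for all n ≥ n₀, k ≥ n, and α ≥ 10 with s = α/√n, the following holds. Let G be an n×n standard Gaussian random matrix and u, v ∈ ℝⁿ standard Gaussian random vectors, all mutually independent. Run a deterministic t-round adaptive algorithm making k linear measurements per round on the input vec(G) + s·(u⊗v) ∈ ℝ^{n²}, and let Q ∈ ℝ^{tk×n²} be the (random) matrix obtained by stacking all query matrices realized along the run. If t ≤ c·log(n²/k)/(log log n + log α), then Pr[‖Q(u⊗v)‖² ≤ n²/100] ≥ 4/5. -/

import Mathlib

/-!
The idea is to follow the energy `‖Q⁽¹⁾x‖² + ⋯ + ‖Q⁽ʲ⁾x‖²` of the plant `x = u ⊗ v` collected in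
the first `j` rounds and to show that it grows by at most a factor `D = 100 α²` per round, except
with small probability.  Since it starts at order `k`, it is at most `k Dᵗ ≤ n² / 100` after the
permitted number of rounds.

*Transcript density.*  For a fixed shift `y`, the responses on the input `g + y`, `g` standard
Gaussian, have an explicit density `lik Q y` with respect to i.i.d. standard Gaussian responses
(`QueryMaps.lintegral_resp`): the queries of a round are orthogonal to all earlier ones, so each
round reveals a fresh Gaussian vector, translated by `Q⁽ʲ⁾ y`, and the Cameron–Martin formula
applies.

*One round.*  Under the reference law the transcript is independent of `(u, v)`, so the next query
matrix is a fixed matrix with `k` orthonormal rows, and `tensor_tail` bounds the probability that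
`‖Q(u ⊗ v)‖²` exceeds `b` while `‖v‖² ≤ 20 n` by `exp (-(b - 4k) / (80n))`.  To return to the true
law one pays the likelihood ratio, which is controlled by its second moment on the event that the
energy so far is at most `B`: there `lik (s x)² ≤ e^{s² B} lik (2 s x)`, and `lik (2 s x)`
integrates to one (`QueryMaps.lik_le`).  Hence the next round collects more than
`4k + 80n (s² B + 2e)` with probability at most `e^{-e}` (`QueryMaps.step_bound`).

*Iteration.*  With `B j = k Dʲ` and `e j = j + 4`, the failure probabilities of the rounds sum to at
most `1/8`, and `‖v‖² > 20 n` has probability at most `1/16`.  The constants `c = 1/8`, `n₀ = 3`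
suffice.
-/

open MeasureTheory ProbabilityTheory Matrix
open scoped ENNReal Classical

noncomputable section

/-- Squared Euclidean norm of a finitely-indexed real vector. -/
def sqNorm {ι : Type*} [Fintype ι] (x : ι → ℝ) : ℝ := ∑ i, x i ^ 2

/-- Squared Frobenius norm of a real matrix. -/
def frobSq {m n : Type*} [Fintype m] [Fintype n] (A : Matrix m n ℝ) : ℝ :=
  ∑ i, ∑ j, A i j ^ 2

/-- Spectral (ℓ₂ operator) norm of a real matrix. -/
def specNorm {m n : Type*} [Fintype m] [Fintype n] (A : Matrix m n ℝ) : ℝ :=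
  sSup ((fun x : n → ℝ => Real.sqrt (sqNorm (A.mulVec x))) '' {x | sqNorm x ≤ 1})

/-- `i`-th largest singular value (1-based), characterized via
`σ_i(A) = min {‖A − X‖ : rank X ≤ i − 1}`. -/
def singVal {m n : Type*} [Fintype m] [Fintype n] (A : Matrix m n ℝ) (i : ℕ) : ℝ :=
  sInf {c | ∃ X : Matrix m n ℝ, X.rank ≤ i - 1 ∧ c = specNorm (A - X)}

/-- Flattening of an `n × n` matrix into a vector in `ℝ^{n²}`. -/
def vec (n : ℕ) (A : Matrix (Fin n) (Fin n) ℝ) : Fin (n * n) → ℝ :=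
  fun i => A (finProdFinEquiv.symm i).1 (finProdFinEquiv.symm i).2

/-- `u ⊗ v = vec (u vᵀ) ∈ ℝ^{n²}`. -/
def tensor {n : ℕ} (u v : Fin n → ℝ) : Fin (n * n) → ℝ :=
  vec n (Matrix.of fun i j => u i * v j)

/-- Standard Gaussian measure on `ι → ℝ`. -/
def stdGaussian (ι : Type*) [Fintype ι] : Measure (ι → ℝ) :=
  Measure.pi fun _ => gaussianReal 0 1

/-- Standard Gaussian measure on `n × n` matrices (as `Fin n → Fin n → ℝ`). -/
def stdGaussianMat (n : ℕ) : Measure (Fin n → Fin n → ℝ) :=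
  Measure.pi fun _ => stdGaussian (Fin n)

/-- Query maps of a deterministic `t`-round adaptive algorithm making `k` linear
measurements per round on inputs in `ℝ^N`. -/
def QueryMaps (N k t : ℕ) : Type :=
  (j : Fin t) → (Fin (j : ℕ) → (Fin k → ℝ)) → Matrix (Fin k) (Fin N) ℝ

namespace QueryMaps

variable {N k t : ℕ}

/-- Restriction of a round-`j` history to the first `i` rounds. -/
def prefixHist {j : Fin t} (h : Fin (j : ℕ) → Fin k → ℝ) {i : Fin t}
    (hij : (i : ℕ) < (j : ℕ)) : Fin (i : ℕ) → Fin k → ℝ :=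
  fun l => h ⟨l.1, l.isLt.trans hij⟩

/-- Validity of query maps: measurability, orthonormal rows within each round, and
orthogonality across rounds along consistent histories. -/
def Valid (Q : QueryMaps N k t) : Prop :=
  (∀ (j : Fin t) (i : Fin k) (l : Fin N), Measurable fun h => Q j h i l) ∧
  (∀ (j : Fin t) (h : Fin (j : ℕ) → Fin k → ℝ), Q j h * (Q j h)ᵀ = 1) ∧
  (∀ (j i : Fin t) (hij : (i : ℕ) < (j : ℕ)) (h : Fin (j : ℕ) → Fin k → ℝ),
      Q j h * (Q i (prefixHist h hij))ᵀ = 0)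

/-- Responses of the algorithm under exact linear measurements of `a`. -/
def resp (Q : QueryMaps N k t) (a : Fin N → ℝ) (j : Fin t) : Fin k → ℝ :=
  (Q j fun i => resp Q a ⟨i.1, i.isLt.trans j.isLt⟩).mulVec a
termination_by (j : ℕ)
decreasing_by exact i.isLt

/-- Responses of the algorithm under noisy linear measurements of `a`, with fresh
per-round noise `g`. -/
def nresp (Q : QueryMaps N k t) (a : Fin N → ℝ) (g : Fin t → Fin k → ℝ) (j : Fin t) :
    Fin k → ℝ :=
  ((Q j fun i => nresp Q a g ⟨i.1, i.isLt.trans j.isLt⟩).mulVec a) + g j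
termination_by (j : ℕ)
decreasing_by exact i.isLt

/-- The `tk × N` matrix stacking all the query matrices realized along the run of the
algorithm on input `a` (exact measurements). -/
def runMat (Q : QueryMaps N k t) (a : Fin N → ℝ) : Matrix (Fin t × Fin k) (Fin N) ℝ :=
  Matrix.of fun p l =>
    Q p.1 (fun i => resp Q a ⟨i.1, i.isLt.trans p.1.isLt⟩) p.2 l

end QueryMaps

/-- Kullback–Leibler divergence, valued in `[0, ∞]`, defined with the natural
logarithm. -/
def klDiv {Ω : Type*} [MeasurableSpace Ω] (P Q : Measure Ω) : ℝ≥0∞ :=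
  if P ≪ Q ∧ Integrable (fun x => Real.log ((P.rnDeriv Q x).toReal)) P then
    ENNReal.ofReal (∫ x, Real.log ((P.rnDeriv Q x).toReal) ∂P)
  else ⊤


/-- The rank-`r` plant `Σ_{i=1}^r uᵢ vᵢᵀ` built from the rows of `U` and `V`. -/
def plant {n r : ℕ} (U V : Fin r → Fin n → ℝ) : Matrix (Fin n) (Fin n) ℝ :=
  Matrix.of fun i j => ∑ l, U l i * V l j

/-- Schatten-`p` norm (real `p`), via the singular values. -/
def schattenNorm {n : ℕ} (p : ℝ) (A : Matrix (Fin n) (Fin n) ℝ) : ℝ :=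
  (∑ i ∈ Finset.range n, singVal A (i + 1) ^ p) ^ (1 / p)

/-- Ky-Fan `p` norm: sum of the `p` largest singular values. -/
def kyFanNorm {n : ℕ} (p : ℕ) (A : Matrix (Fin n) (Fin n) ℝ) : ℝ :=
  ∑ i ∈ Finset.range p, singVal A (i + 1)

/-! ### Finite-dimensional standard Gaussians -/

instance isProb_stdGaussian (ι : Type*) [Fintype ι] :
    IsProbabilityMeasure (_root_.stdGaussian ι) := by
  unfold _root_.stdGaussian; infer_instance

instance isProb_stdGaussianMat (n : ℕ) : IsProbabilityMeasure (stdGaussianMat n) := by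
  unfold stdGaussianMat; infer_instance

lemma sqNorm_nonneg {ι : Type*} [Fintype ι] (x : ι → ℝ) : 0 ≤ sqNorm x :=
  Finset.sum_nonneg fun _ _ => sq_nonneg _

lemma sqNorm_eq_dotProduct {ι : Type*} [Fintype ι] (x : ι → ℝ) : sqNorm x = x ⬝ᵥ x := by
  simp [sqNorm, dotProduct, sq]

lemma charFun_map_toLp_stdGaussian {ι : Type*} [Fintype ι] (t : EuclideanSpace ℝ ι) :
    charFun ((_root_.stdGaussian ι).map (WithLp.toLp 2)) t
      = Complex.exp (-((sqNorm (WithLp.ofLp t) : ℝ) : ℂ) / 2) := by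
  unfold _root_.stdGaussian
  simp_rw [charFun_pi, charFun_gaussianReal, ← Complex.exp_sum, sqNorm]
  simp [Finset.sum_div, neg_div]

/-- A matrix with orthonormal rows pushes the standard Gaussian forward to the standard
Gaussian. -/
lemma map_mulVec_stdGaussian {p q : Type*} [Fintype p] [Fintype q] [DecidableEq p]
    (L : Matrix p q ℝ) (hL : L * Lᵀ = 1) :
    (_root_.stdGaussian q).map (fun x => L *ᵥ x) = _root_.stdGaussian p := by
  have hm : Measurable (fun x : q → ℝ => L *ᵥ x) := by
    have : Continuous (fun x : q → ℝ => L *ᵥ x) := by fun_prop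
    exact this.measurable
  apply (MeasurableEquiv.toLp 2 (p → ℝ)).map_measurableEquiv_injective
  have : IsFiniteMeasure ((_root_.stdGaussian q).map (fun x => L *ᵥ x)) := by
    have := Measure.isProbabilityMeasure_map (μ := _root_.stdGaussian q) hm.aemeasurable
    infer_instance
  apply Measure.ext_of_charFun (E := EuclideanSpace ℝ p)
  ext t
  rw [MeasurableEquiv.coe_toLp, charFun_map_toLp_stdGaussian,
    Measure.map_map (by fun_prop) hm, charFun_apply, integral_map (by fun_prop) (by fun_prop)]
  have h2 := charFun_map_toLp_stdGaussian (WithLp.toLp 2 (Lᵀ *ᵥ (WithLp.ofLp t)))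
  rw [charFun_apply, integral_map (by fun_prop) (by fun_prop)] at h2
  have h3 : sqNorm (Lᵀ *ᵥ (WithLp.ofLp t)) = sqNorm (WithLp.ofLp t) := by
    rw [sqNorm_eq_dotProduct, sqNorm_eq_dotProduct, dotProduct_mulVec, vecMul_transpose,
      mulVec_mulVec, hL, one_mulVec]
  simp only [h3] at h2
  rw [← h2]
  congr 1
  ext x
  congr 3
  simp only [EuclideanSpace.inner_eq_star_dotProduct, Function.comp, star_trivial]
  rw [mulVec_transpose, dotProduct_mulVec]

/-- A standard Gaussian vector splits into independent components along and orthogonal to the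
row space of a matrix with orthonormal rows. -/
lemma lintegral_stdGaussian_split {k N : Type*} [Fintype k] [Fintype N] [DecidableEq k]
    [DecidableEq N] (A : Matrix k N ℝ) (hA : A * Aᵀ = 1) (f : (N → ℝ) → ℝ≥0∞)
    (hf : Measurable f) :
    ∫⁻ a, f a ∂(_root_.stdGaussian N) =
      ∫⁻ g, ∫⁻ a, f (Aᵀ *ᵥ g + (a - Aᵀ *ᵥ (A *ᵥ a))) ∂(_root_.stdGaussian N)
        ∂(_root_.stdGaussian k) := by
  set L : Matrix N (k ⊕ N) ℝ := Matrix.fromCols Aᵀ (1 - Aᵀ * A) with hLdef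
  have hL : L * Lᵀ = 1 := by
    have h1 : (Aᵀ * A) * (Aᵀ * A) = Aᵀ * A := by
      rw [Matrix.mul_assoc, ← Matrix.mul_assoc A, hA, Matrix.one_mul]
    rw [hLdef, Matrix.transpose_fromCols, Matrix.fromCols_mul_fromRows]
    simp only [transpose_transpose, transpose_sub, transpose_one, transpose_mul]
    rw [Matrix.mul_sub, Matrix.sub_mul, Matrix.sub_mul, h1]
    simp
  have hc : Continuous (fun x : (k ⊕ N) → ℝ => L *ᵥ x) := by fun_prop
  conv_lhs => rw [← map_mulVec_stdGaussian L hL, lintegral_map hf hc.measurable]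
  have mp := measurePreserving_sumPiEquivProdPi_symm (ι := k) (ι' := N)
    (X := fun _ => ℝ) (fun _ => gaussianReal 0 1)
  have : _root_.stdGaussian (k ⊕ N) = Measure.pi fun _ => gaussianReal 0 1 := rfl
  rw [this, ← mp.lintegral_comp (by exact hf.comp hc.measurable)]
  rw [lintegral_prod _ (by
    apply Measurable.aemeasurable
    exact (hf.comp hc.measurable).comp mp.measurable)]
  refine lintegral_congr fun g => lintegral_congr fun a => ?_
  congr 1
  have : (MeasurableEquiv.sumPiEquivProdPi (fun _ : k ⊕ N => ℝ)).symm (g, a) = Sum.elim g a := by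
    ext i; cases i <;> rfl
  rw [this, hLdef, fromCols_mulVec_sumElim, sub_mulVec, one_mulVec, mulVec_mulVec]

lemma lintegral_pi_prod {ι : Type*} [Fintype ι] (f : ι → ℝ → ℝ≥0∞) (hf : ∀ i, Measurable (f i)) :
    ∫⁻ x, ∏ i, f i (x i) ∂(_root_.stdGaussian ι) = ∏ i, ∫⁻ y, f i y ∂(gaussianReal 0 1) := by
  unfold _root_.stdGaussian
  rw [lintegral_prod_eq_prod_lintegral_of_indepFun Finset.univ (fun i (x : ι → ℝ) => f i (x i))
    (iIndepFun_pi fun i => (hf i).aemeasurable) (fun i => (hf i).comp (measurable_pi_apply i))]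
  refine Finset.prod_congr rfl fun i _ => ?_
  exact (measurePreserving_eval (fun _ : ι => gaussianReal 0 1) i).lintegral_comp (hf i)

lemma gaussianReal_eq_withDensity (y : ℝ) :
    gaussianReal y 1 = (gaussianReal 0 1).withDensity
      (fun x => ENNReal.ofReal (Real.exp (y * x - y ^ 2 / 2))) := by
  rw [gaussianReal_of_var_ne_zero _ one_ne_zero, gaussianReal_of_var_ne_zero _ one_ne_zero,
    ← withDensity_mul _ (by fun_prop) (by fun_prop)]
  congr 1
  ext x
  simp only [Pi.mul_apply, gaussianPDF, gaussianPDFReal]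
  rw [← ENNReal.ofReal_mul (by positivity), mul_assoc _ (Real.exp _) (Real.exp _), ← Real.exp_add]
  congr 3
  simp
  ring

/-- Cameron–Martin formula for the finite-dimensional standard Gaussian. -/
lemma lintegral_stdGaussian_add {ι : Type*} [Fintype ι] (y : ι → ℝ) (f : (ι → ℝ) → ℝ≥0∞)
    (hf : Measurable f) :
    ∫⁻ x, f (x + y) ∂(_root_.stdGaussian ι) =
      ∫⁻ x, ENNReal.ofReal (Real.exp (y ⬝ᵥ x - sqNorm y / 2)) * f x ∂(_root_.stdGaussian ι) := by
  have hd : Measurable fun x : ι → ℝ => ENNReal.ofReal (Real.exp (y ⬝ᵥ x - sqNorm y / 2)) := by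
    unfold dotProduct; fun_prop
  have key : (_root_.stdGaussian ι).map (fun x => x + y) = (_root_.stdGaussian ι).withDensity
      (fun x => ENNReal.ofReal (Real.exp (y ⬝ᵥ x - sqNorm y / 2))) := by
    have h1 : (_root_.stdGaussian ι).map (fun x => x + y)
        = Measure.pi fun i => gaussianReal (y i) 1 := by
      have := Measure.pi_map_pi (μ := fun _ : ι => gaussianReal 0 1) (f := fun i x => x + y i)
        (fun i => by fun_prop)
      simp only [gaussianReal_map_add_const, zero_add] at this
      rw [← this]; rfl
    rw [h1]
    refine Measure.pi_eq fun s hs => ?_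
    rw [withDensity_apply _ (MeasurableSet.univ_pi hs), ← lintegral_indicator
      (MeasurableSet.univ_pi hs)]
    have h2 : ∀ x : ι → ℝ, (Set.univ.pi s).indicator
        (fun x => ENNReal.ofReal (Real.exp (y ⬝ᵥ x - sqNorm y / 2))) x =
        ∏ i, (s i).indicator (fun z => ENNReal.ofReal (Real.exp (y i * z - y i ^ 2 / 2))) (x i) := by
      intro x
      by_cases hx : x ∈ Set.univ.pi s
      · have hx' : ∀ i, x i ∈ s i := fun i => hx i (Set.mem_univ i)
        rw [Set.indicator_of_mem hx]
        simp_rw [Set.indicator_of_mem (hx' _)]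
        rw [← ENNReal.ofReal_prod_of_nonneg (fun _ _ => (Real.exp_pos _).le), ← Real.exp_sum]
        simp [dotProduct, sqNorm, Finset.sum_div]
      · rw [Set.indicator_of_notMem hx]
        have : ∃ i, x i ∉ s i := by simpa [Set.mem_pi] using hx
        obtain ⟨i, hi⟩ := this
        exact (Finset.prod_eq_zero (Finset.mem_univ i) (Set.indicator_of_notMem hi _)).symm
    simp_rw [h2]
    rw [lintegral_pi_prod _ (fun i => Measurable.indicator (by fun_prop) (hs i))]
    refine Finset.prod_congr rfl fun i _ => ?_
    rw [lintegral_indicator (hs i), gaussianReal_eq_withDensity (y i), withDensity_apply _ (hs i)]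
  rw [← lintegral_map hf (measurable_add_const y), key, lintegral_withDensity_eq_lintegral_mul _ hd hf]
  rfl

lemma lintegral_exp_sq_gaussianReal_le (y : ℝ) (h0 : 0 ≤ y) (hy : 2 * y ≤ 1 / 2) :
    ∫⁻ x, ENNReal.ofReal (Real.exp (y * x ^ 2)) ∂(gaussianReal 0 1)
      ≤ ENNReal.ofReal (Real.exp (2 * y)) := by
  rw [gaussianReal_of_var_ne_zero _ one_ne_zero,
    lintegral_withDensity_eq_lintegral_mul _ (by fun_prop) (by fun_prop)]
  have hb : 0 < 1 / 2 - y := by linarith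
  have h1 : ∀ x : ℝ, ((gaussianPDF 0 1) * fun x => ENNReal.ofReal (Real.exp (y * x ^ 2))) x =
      ENNReal.ofReal ((Real.sqrt (2 * Real.pi))⁻¹ * Real.exp (-(1 / 2 - y) * x ^ 2)) := by
    intro x
    simp only [Pi.mul_apply, gaussianPDF, gaussianPDFReal]
    rw [← ENNReal.ofReal_mul (by positivity), mul_assoc _ (Real.exp _) (Real.exp _), ← Real.exp_add]
    congr 3
    · simp
    · simp; ring
  simp_rw [h1]
  rw [← ofReal_integral_eq_lintegral_ofReal ((integrable_exp_neg_mul_sq hb).const_mul _)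
    (Filter.Eventually.of_forall fun x => by positivity), integral_const_mul, integral_gaussian]
  refine ENNReal.ofReal_le_ofReal ?_
  rw [← Real.sqrt_inv, ← Real.sqrt_mul (by positivity)]
  refine Real.sqrt_le_iff.2 ⟨by positivity, ?_⟩
  have h2 : (2 * Real.pi)⁻¹ * (Real.pi / (1 / 2 - y)) = (1 - 2 * y)⁻¹ := by
    have := Real.pi_pos.ne'
    have : 1 - 2 * y ≠ 0 := by linarith
    field_simp
  rw [h2, ← Real.exp_nat_mul, inv_le_iff_one_le_mul₀ (by linarith)]
  -- `1 ≤ (1 - 2y) (1 + 4y) ≤ (1 - 2y) e^{4y}`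
  have h3 := Real.add_one_le_exp ((2 : ℕ) * (2 * y))
  push_cast at h3 ⊢
  nlinarith

/-! ### Tail bounds for Gaussian quadratic forms -/

lemma sqNorm_mulVec_le {k N : Type*} [Fintype k] [Fintype N] [DecidableEq k]
    (A : Matrix k N ℝ) (hA : A * Aᵀ = 1) (x : N → ℝ) : sqNorm (A *ᵥ x) ≤ sqNorm x := by
  have h := sqNorm_nonneg (x - Aᵀ *ᵥ (A *ᵥ x))
  have h1 : x ⬝ᵥ (Aᵀ *ᵥ (A *ᵥ x)) = (A *ᵥ x) ⬝ᵥ (A *ᵥ x) := by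
    rw [dotProduct_mulVec, vecMul_transpose]
  have h2 : (Aᵀ *ᵥ (A *ᵥ x)) ⬝ᵥ (Aᵀ *ᵥ (A *ᵥ x)) = (A *ᵥ x) ⬝ᵥ (A *ᵥ x) := by
    rw [dotProduct_mulVec, vecMul_transpose, mulVec_mulVec, hA, one_mulVec]
  rw [sqNorm_eq_dotProduct, sub_dotProduct, dotProduct_sub, dotProduct_sub, h2,
    dotProduct_comm (Aᵀ *ᵥ (A *ᵥ x)) x, h1] at h
  rw [sqNorm_eq_dotProduct, sqNorm_eq_dotProduct]
  linarith

/-- Moment generating function of a Gaussian quadratic form `‖A u‖²` below the inverse operator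
norm: diagonalizing `AᵀA` and using rotation invariance reduces to dimension one. -/
lemma lintegral_exp_sqNorm_mulVec_le {m n : Type*} [Fintype m] [Fintype n] [DecidableEq n]
    (A : Matrix m n ℝ) (κ l : ℝ) (hl : 0 ≤ l) (hA : ∀ u, sqNorm (A *ᵥ u) ≤ κ * sqNorm u)
    (hκ : 2 * (l * κ) ≤ 1 / 2) :
    ∫⁻ u, ENNReal.ofReal (Real.exp (l * sqNorm (A *ᵥ u))) ∂(_root_.stdGaussian n)
      ≤ ENNReal.ofReal (Real.exp (2 * l * frobSq A)) := by
  have hM : (Aᵀ * A).IsHermitian := by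
    simpa [conjTranspose_eq_transpose_of_trivial] using isHermitian_conjTranspose_mul_self A
  set U : Matrix n n ℝ := hM.eigenvectorUnitary.1 with hU
  set d := hM.eigenvalues with hd
  have hUU : Uᵀ * U = 1 := by
    have := Unitary.coe_star_mul_self hM.eigenvectorUnitary
    rwa [star_eq_conjTranspose, conjTranspose_eq_transpose_of_trivial] at this
  have hUU' : U * Uᵀ = 1 := mul_eq_one_comm.1 hUU
  have hspec : Aᵀ * A = U * diagonal d * Uᵀ := by
    have := hM.spectral_theorem
    rw [Unitary.conjStarAlgAut_apply] at this
    simpa [star_eq_conjTranspose, conjTranspose_eq_transpose_of_trivial, Function.comp_def]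
      using this
  have hdiag : Uᵀ * (Aᵀ * A) * U = diagonal d := by
    rw [hspec]
    calc Uᵀ * (U * diagonal d * Uᵀ) * U = (Uᵀ * U) * diagonal d * (Uᵀ * U) := by
          simp only [Matrix.mul_assoc]
      _ = diagonal d := by rw [hUU, Matrix.one_mul, Matrix.mul_one]
  have hq : ∀ x, sqNorm (A *ᵥ (U *ᵥ x)) = ∑ i, d i * x i ^ 2 := by
    intro x
    have : (A *ᵥ (U *ᵥ x)) ⬝ᵥ (A *ᵥ (U *ᵥ x)) = x ⬝ᵥ ((Uᵀ * (Aᵀ * A) * U) *ᵥ x) := by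
      have e : Uᵀ * (Aᵀ * A) * U = (A * U)ᵀ * (A * U) := by
        simp only [transpose_mul, Matrix.mul_assoc]
      rw [e, ← mulVec_mulVec x (A * U)ᵀ, dotProduct_mulVec x, vecMul_transpose, mulVec_mulVec]
    rw [sqNorm_eq_dotProduct, this, hdiag]
    simp only [dotProduct, mulVec_diagonal]
    exact Finset.sum_congr rfl fun i _ => by ring
  have hUn : ∀ x, sqNorm (U *ᵥ x) = sqNorm x := by
    intro x
    rw [sqNorm_eq_dotProduct, sqNorm_eq_dotProduct, dotProduct_mulVec, ← mulVec_transpose,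
      mulVec_mulVec, hUU, one_mulVec]
  have hd' : ∀ i, 0 ≤ d i ∧ d i ≤ κ := by
    intro i
    have h1 : sqNorm (A *ᵥ (U *ᵥ (Pi.single i 1))) = d i := by
      rw [hq]
      simp [Pi.single_apply]
    have h2 := hA (U *ᵥ (Pi.single i 1))
    have h3 : sqNorm (Pi.single i (1 : ℝ) : n → ℝ) = 1 := by
      simp [sqNorm, Pi.single_apply]
    rw [hUn, h1, h3, mul_one] at h2
    exact ⟨h1 ▸ sqNorm_nonneg _, h2⟩
  have htr : ∑ i, d i = frobSq A := by
    have : trace (Aᵀ * A) = trace (diagonal d) := by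
      rw [← hdiag, trace_mul_comm (Uᵀ * (Aᵀ * A)) U, ← Matrix.mul_assoc, hUU', Matrix.one_mul]
    rw [trace_diagonal] at this
    rw [← this]
    simp only [trace, diag_apply, mul_apply, transpose_apply, frobSq]
    rw [Finset.sum_comm]
    exact Finset.sum_congr rfl fun i _ => Finset.sum_congr rfl fun j _ => by ring
  have hme : Measurable fun u : n → ℝ => ENNReal.ofReal (Real.exp (l * sqNorm (A *ᵥ u))) := by
    unfold sqNorm
    have : Continuous (fun x : n → ℝ => A *ᵥ x) := by fun_prop
    have := this.measurable
    fun_prop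
  have hmU : Measurable (fun x : n → ℝ => U *ᵥ x) := by
    have : Continuous (fun x : n → ℝ => U *ᵥ x) := by fun_prop
    exact this.measurable
  rw [← map_mulVec_stdGaussian U hUU', lintegral_map hme hmU]
  have : ∀ x, ENNReal.ofReal (Real.exp (l * sqNorm (A *ᵥ (U *ᵥ x))))
      = ∏ i, ENNReal.ofReal (Real.exp ((l * d i) * x i ^ 2)) := by
    intro x
    rw [hq, ← ENNReal.ofReal_prod_of_nonneg (fun _ _ => (Real.exp_pos _).le), ← Real.exp_sum,
      Finset.mul_sum]
    simp only [mul_assoc]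
  simp_rw [this]
  rw [lintegral_pi_prod (fun i z => ENNReal.ofReal (Real.exp ((l * d i) * z ^ 2)))
    (fun i => by fun_prop)]
  refine (Finset.prod_le_prod' fun i _ => lintegral_exp_sq_gaussianReal_le (l * d i)
    (mul_nonneg hl (hd' i).1) ?_).trans ?_
  · nlinarith [mul_le_mul_of_nonneg_left (hd' i).2 hl]
  · rw [← ENNReal.ofReal_prod_of_nonneg (fun _ _ => (Real.exp_pos _).le), ← Real.exp_sum,
      ← htr, Finset.mul_sum]
    simp only [mul_assoc, le_refl]

lemma chernoff {Ω : Type*} [MeasurableSpace Ω] (μ : Measure Ω) (X : Ω → ℝ) (hX : Measurable X)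
    (l b : ℝ) (hl : 0 ≤ l) :
    μ {ω | b < X ω} ≤
      ENNReal.ofReal (Real.exp (-(l * b))) * ∫⁻ ω, ENNReal.ofReal (Real.exp (l * X ω)) ∂μ := by
  have hS : MeasurableSet {ω | b < X ω} := measurableSet_lt measurable_const hX
  rw [← lintegral_indicator_one hS, ← lintegral_const_mul _ (by fun_prop)]
  refine lintegral_mono fun ω => ?_
  by_cases h : ω ∈ {ω | b < X ω}
  · rw [Set.indicator_of_mem h, ← ENNReal.ofReal_mul (Real.exp_pos _).le, ← Real.exp_add]
    simp only [Pi.one_apply, ENNReal.one_le_ofReal, Real.one_le_exp_iff]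
    have : b < X ω := h
    nlinarith
  · rw [Set.indicator_of_notMem h]; exact zero_le

lemma sqNorm_tensor {n : ℕ} (u v : Fin n → ℝ) : sqNorm (tensor u v) = sqNorm u * sqNorm v := by
  unfold sqNorm tensor _root_.vec
  rw [← finProdFinEquiv.sum_comp]
  simp [Fintype.sum_prod_type, Finset.sum_mul_sum, mul_pow]

lemma measurable_tensor {n : ℕ} :
    Measurable (fun w : (Fin n → ℝ) × (Fin n → ℝ) => tensor w.1 w.2) := by
  unfold tensor _root_.vec
  simp only [of_apply]
  fun_prop

lemma measurable_mulVec_const {k N : Type*} [Fintype k] [Fintype N] (A : Matrix k N ℝ) :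
    Measurable (fun x : N → ℝ => A *ᵥ x) := by
  have : Continuous (fun x : N → ℝ => A *ᵥ x) := by fun_prop
  exact this.measurable

lemma measurable_sqNorm {ι : Type*} [Fintype ι] : Measurable (fun x : ι → ℝ => sqNorm x) := by
  unfold sqNorm; fun_prop

/-- Tail bound for the projection of `u ⊗ v` onto a fixed `k`-dimensional space, on the event
`‖v‖² ≤ 20 n`.  Conditionally on `v` the projection is a quadratic form in `u` of operator norm
at most `‖v‖²`, whose trace is in turn a quadratic form in `v` of operator norm at most `n` and
trace `k`. -/
lemma tensor_tail {n k : ℕ} (hn : 0 < n) (A : Matrix (Fin k) (Fin (n * n)) ℝ) (hA : A * Aᵀ = 1)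
    (b : ℝ) :
    ((_root_.stdGaussian (Fin n)).prod (_root_.stdGaussian (Fin n)))
      {w | sqNorm w.2 ≤ 20 * n ∧ b < sqNorm (A *ᵥ tensor w.1 w.2)}
      ≤ ENNReal.ofReal (Real.exp (-(b - 4 * k) / (80 * n))) := by
  have hn' : (0 : ℝ) < n := by exact_mod_cast hn
  set l : ℝ := 1 / (80 * n) with hl
  have hl0 : 0 ≤ l := by positivity
  have hln : l * n = 1 / 80 := by rw [hl]; field_simp
  -- the linear map `u ↦ A (u ⊗ v)`
  let M : (Fin n → ℝ) → Matrix (Fin k) (Fin n) ℝ := fun v =>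
    Matrix.of fun i a => ∑ c, A i (finProdFinEquiv (a, c)) * v c
  have hM : ∀ u v, A *ᵥ tensor u v = M v *ᵥ u := by
    intro u v
    ext i
    simp only [mulVec, dotProduct, M, tensor, _root_.vec, of_apply]
    rw [← finProdFinEquiv.sum_comp, Fintype.sum_prod_type]
    refine Finset.sum_congr rfl fun a _ => ?_
    rw [Finset.sum_mul]
    exact Finset.sum_congr rfl fun c _ => by simp; ring
  have hMop : ∀ u v, sqNorm (M v *ᵥ u) ≤ sqNorm v * sqNorm u := by
    intro u v
    rw [← hM, mul_comm (sqNorm v), ← sqNorm_tensor]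
    exact sqNorm_mulVec_le A hA _
  let B : Matrix (Fin k × Fin n) (Fin n) ℝ :=
    Matrix.of fun p c => A p.1 (finProdFinEquiv (p.2, c))
  have hBF : ∀ v, frobSq (M v) = sqNorm (B *ᵥ v) := by
    intro v
    simp [frobSq, sqNorm, Fintype.sum_prod_type, M, B, mulVec, dotProduct]
  have hBop : ∀ v, sqNorm (B *ᵥ v) ≤ n * sqNorm v := by
    intro v
    have h1 : frobSq (M v) = ∑ a, sqNorm (M v *ᵥ Pi.single a 1) := by
      simp only [frobSq, sqNorm, mulVec_single_one, col_apply]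
      exact Finset.sum_comm
    rw [← hBF, h1]
    refine (Finset.sum_le_sum fun a _ => hMop (Pi.single a 1) v).trans ?_
    have h3 : ∀ a : Fin n, sqNorm (Pi.single a (1 : ℝ) : Fin n → ℝ) = 1 := by
      intro a; simp [sqNorm, Pi.single_apply]
    simp [h3]
  have hBfrob : frobSq B = k := by
    have h1 : trace (A * Aᵀ) = k := by rw [hA]; simp
    rw [← h1]
    simp only [frobSq, B, of_apply, trace, diag_apply, mul_apply, transpose_apply,
      Fintype.sum_prod_type]
    refine Finset.sum_congr rfl fun i _ => ?_
    rw [← finProdFinEquiv.sum_comp, Fintype.sum_prod_type]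
    exact Finset.sum_congr rfl fun a _ => Finset.sum_congr rfl fun c _ => by ring
  have hS : MeasurableSet {w : (Fin n → ℝ) × (Fin n → ℝ) |
      sqNorm w.2 ≤ 20 * n ∧ b < sqNorm (A *ᵥ tensor w.1 w.2)} := by
    have h1 : MeasurableSet {w : (Fin n → ℝ) × (Fin n → ℝ) | sqNorm w.2 ≤ 20 * n} :=
      measurableSet_le (measurable_sqNorm.comp measurable_snd) measurable_const
    have h2 : MeasurableSet {w : (Fin n → ℝ) × (Fin n → ℝ) | b < sqNorm (A *ᵥ tensor w.1 w.2)} :=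
      measurableSet_lt measurable_const
        (measurable_sqNorm.comp ((measurable_mulVec_const A).comp measurable_tensor))
    exact h1.inter h2
  rw [Measure.prod_apply_symm hS]
  have hv : ∀ v : Fin n → ℝ, (_root_.stdGaussian (Fin n)) ((fun u => (u, v)) ⁻¹'
      {w : (Fin n → ℝ) × (Fin n → ℝ) | sqNorm w.2 ≤ 20 * n ∧ b < sqNorm (A *ᵥ tensor w.1 w.2)})
      ≤ ENNReal.ofReal (Real.exp (-(l * b))) *
        ENNReal.ofReal (Real.exp ((2 * l) * sqNorm (B *ᵥ v))) := by
    intro v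
    by_cases h : sqNorm v ≤ 20 * n
    · have : ((fun u => (u, v)) ⁻¹' {w : (Fin n → ℝ) × (Fin n → ℝ) |
          sqNorm w.2 ≤ 20 * n ∧ b < sqNorm (A *ᵥ tensor w.1 w.2)})
          = {u | b < sqNorm (M v *ᵥ u)} := by
        ext u; simp [h, hM]
      rw [this]
      refine (chernoff _ _ (measurable_sqNorm.comp (measurable_mulVec_const (M v))) l b hl0).trans ?_
      gcongr
      rw [← hBF]
      refine lintegral_exp_sqNorm_mulVec_le (M v) (sqNorm v) l hl0 (fun u => hMop u v) ?_
      nlinarith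
    · have : ((fun u => (u, v)) ⁻¹' {w : (Fin n → ℝ) × (Fin n → ℝ) |
          sqNorm w.2 ≤ 20 * n ∧ b < sqNorm (A *ᵥ tensor w.1 w.2)}) = ∅ := by
        ext u; simp [h]
      rw [this]; simp
  refine (lintegral_mono hv).trans ?_
  have hmB := measurable_sqNorm.comp (measurable_mulVec_const B)
  simp only [Function.comp_def] at hmB
  rw [lintegral_const_mul _ (by fun_prop)]
  refine (mul_le_mul_right (lintegral_exp_sqNorm_mulVec_le B n (2 * l) (by positivity) hBop
    (by nlinarith)) _).trans ?_
  rw [← ENNReal.ofReal_mul (Real.exp_pos _).le, ← Real.exp_add, hBfrob]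
  refine ENNReal.ofReal_le_ofReal (Real.exp_le_exp.2 (le_of_eq ?_))
  rw [hl]; field_simp; ring

/-! ### The law of the transcript -/

namespace QueryMaps

variable {N k t : ℕ}

/-- The history available before round `j`, extracted from a full transcript. -/
def hist (r : Fin t → Fin k → ℝ) (j : Fin t) : Fin (j : ℕ) → Fin k → ℝ :=
  fun i => r ⟨i.1, i.isLt.trans j.isLt⟩

/-- The squared norm of the projection of `x` onto all queries issued along the transcript `r`. -/
def energy (Q : QueryMaps N k t) (r : Fin t → Fin k → ℝ) (x : Fin N → ℝ) : ℝ :=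
  ∑ j, sqNorm (Q j (hist r j) *ᵥ x)

/-- Likelihood ratio at the transcript `r` of the run on Gaussian input shifted by `x` against
pure Gaussian responses. -/
def lik (Q : QueryMaps N k t) (x : Fin N → ℝ) (r : Fin t → Fin k → ℝ) : ℝ :=
  Real.exp (∑ j, ((Q j (hist r j) *ᵥ x) ⬝ᵥ r j - sqNorm (Q j (hist r j) *ᵥ x) / 2))

/-- The query matrix of the first round. -/
def first (Q : QueryMaps N k (t + 1)) : Matrix (Fin k) (Fin N) ℝ := Q 0 Fin.elim0

/-- The algorithm that remains once the first response is fixed to be `z`. -/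
def shift (Q : QueryMaps N k (t + 1)) (z : Fin k → ℝ) : QueryMaps N k t :=
  fun j h => Q j.succ (Fin.cons (α := fun _ => Fin k → ℝ) z h)

/-- The algorithm with its last round removed. -/
def dropLast (Q : QueryMaps N k (t + 1)) : QueryMaps N k t := fun j h => Q j.castSucc h

lemma resp_eq (Q : QueryMaps N k t) (a : Fin N → ℝ) (j : Fin t) :
    resp Q a j = Q j (hist (resp Q a) j) *ᵥ a := by
  rw [resp]; rfl

lemma resp_zero (Q : QueryMaps N k (t + 1)) (a : Fin N → ℝ) :
    resp Q a 0 = first Q *ᵥ a := by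
  rw [resp_eq, first]
  congr 2
  ext i
  exact i.elim0

lemma resp_succ (Q : QueryMaps N k (t + 1)) (a : Fin N → ℝ) :
    ∀ (m : ℕ) (hm : m < t), resp Q a (Fin.succ ⟨m, hm⟩) =
      resp (shift Q (resp Q a 0)) a ⟨m, hm⟩ := by
  intro m
  induction m using Nat.strong_induction_on with
  | _ m ih =>
    intro hm
    rw [resp_eq, resp_eq (shift Q _)]
    unfold shift
    congr 2
    funext i
    refine Fin.cases ?_ (fun i => ?_) i
    · rfl
    · exact ih i.1 i.isLt (i.isLt.trans hm)

lemma resp_eq_cons (Q : QueryMaps N k (t + 1)) (a : Fin N → ℝ) :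
    resp Q a = Fin.cons (α := fun _ => Fin k → ℝ) (resp Q a 0)
      (resp (shift Q (resp Q a 0)) a) := by
  funext j
  refine Fin.cases rfl (fun j => ?_) j
  exact resp_succ Q a j.1 j.2

lemma resp_dropLast (Q : QueryMaps N k (t + 1)) (a : Fin N → ℝ) :
    ∀ (m : ℕ) (hm : m < t), resp (dropLast Q) a ⟨m, hm⟩ = resp Q a (Fin.castSucc ⟨m, hm⟩) := by
  intro m
  induction m using Nat.strong_induction_on with
  | _ m ih =>
    intro hm
    rw [resp_eq, resp_eq Q]
    unfold dropLast
    congr 2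
    funext i
    exact ih i.1 i.isLt (i.isLt.trans hm)

/-- Responses do not see components orthogonal to all queries. -/
lemma resp_add_orth (Q : QueryMaps N k t) (a b : Fin N → ℝ) (h : ∀ j h', Q j h' *ᵥ b = 0) :
    resp Q (a + b) = resp Q a := by
  have : ∀ (m : ℕ) (hm : m < t), resp Q (a + b) ⟨m, hm⟩ = resp Q a ⟨m, hm⟩ := by
    intro m
    induction m using Nat.strong_induction_on with
    | _ m ih =>
      intro hm
      rw [resp_eq, resp_eq Q a, mulVec_add, h, add_zero]
      congr 2
      funext i
      exact ih i.1 i.isLt (i.isLt.trans hm)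
  funext j
  exact this j.1 j.2

lemma Valid.shift {Q : QueryMaps N k (t + 1)} (hQ : Q.Valid) (z : Fin k → ℝ) :
    (shift Q z).Valid := by
  refine ⟨fun j i l => ?_, fun j h => hQ.2.1 _ _, fun j i hij h => ?_⟩
  · refine (hQ.1 j.succ i l).comp ?_
    refine measurable_pi_lambda _ fun a => ?_
    refine Fin.cases ?_ (fun b => ?_) a
    · exact measurable_const
    · exact measurable_pi_apply b
  · have := hQ.2.2 j.succ i.succ (Nat.succ_lt_succ hij)
      (Fin.cons (α := fun _ => Fin k → ℝ) z h)
    unfold QueryMaps.shift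
    convert this using 3
    congr 1
    funext a
    refine Fin.cases ?_ (fun b => ?_) a
    · rfl
    · rfl

lemma Valid.shift_mul_first {Q : QueryMaps N k (t + 1)} (hQ : Q.Valid) (z : Fin k → ℝ)
    (j : Fin t) (h : Fin (j : ℕ) → Fin k → ℝ) : QueryMaps.shift Q z j h * (first Q)ᵀ = 0 := by
  have := hQ.2.2 j.succ 0 (Nat.succ_pos _) (Fin.cons (α := fun _ => Fin k → ℝ) z h)
  unfold QueryMaps.shift first
  convert this using 3
  congr 1
  funext i
  exact i.elim0

lemma Valid.dropLast {Q : QueryMaps N k (t + 1)} (hQ : Q.Valid) : (dropLast Q).Valid :=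
  ⟨fun j i l => hQ.1 j.castSucc i l, fun j h => hQ.2.1 j.castSucc h,
    fun j i hij h => hQ.2.2 j.castSucc i.castSucc hij h⟩

lemma Valid.measurable_mulVec {Q : QueryMaps N k t} (hQ : Q.Valid) (j : Fin t) :
    Measurable fun p : (Fin t → Fin k → ℝ) × (Fin N → ℝ) => Q j (hist p.1 j) *ᵥ p.2 := by
  refine measurable_pi_lambda _ fun i => ?_
  simp only [mulVec, dotProduct]
  refine Finset.measurable_sum _ fun l _ => Measurable.mul ?_ (by fun_prop)
  refine (hQ.1 j i l).comp ?_
  unfold hist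
  fun_prop

lemma Valid.measurable_energy {Q : QueryMaps N k t} (hQ : Q.Valid) :
    Measurable fun p : (Fin t → Fin k → ℝ) × (Fin N → ℝ) => energy Q p.1 p.2 :=
  Finset.measurable_sum _ fun j _ => measurable_sqNorm.comp (hQ.measurable_mulVec j)

lemma Valid.measurable_lik {Q : QueryMaps N k t} (hQ : Q.Valid) :
    Measurable fun p : (Fin t → Fin k → ℝ) × (Fin N → ℝ) => lik Q p.2 p.1 := by
  unfold lik
  refine Real.measurable_exp.comp (Finset.measurable_sum _ fun j _ => Measurable.sub ?_ ?_)
  · have := hQ.measurable_mulVec j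
    simp only [dotProduct]
    fun_prop
  · exact (measurable_sqNorm.comp (hQ.measurable_mulVec j)).div_const _

lemma Valid.measurable_lik_right {Q : QueryMaps N k t} (hQ : Q.Valid) (x : Fin N → ℝ) :
    Measurable fun r : Fin t → Fin k → ℝ => lik Q x r :=
  Measurable.comp (g := fun p : (Fin t → Fin k → ℝ) × (Fin N → ℝ) => lik Q p.2 p.1)
    (f := fun r => (r, x)) hQ.measurable_lik measurable_prodMk_right

lemma Valid.measurable_resp {Q : QueryMaps N k t} (hQ : Q.Valid) :
    Measurable fun a : Fin N → ℝ => resp Q a := by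
  have : ∀ (m : ℕ) (hm : m < t), Measurable fun a : Fin N → ℝ => resp Q a ⟨m, hm⟩ := by
    intro m
    induction m using Nat.strong_induction_on with
    | _ m ih =>
      intro hm
      simp_rw [resp_eq]
      refine measurable_pi_lambda _ fun i => ?_
      simp only [mulVec, dotProduct]
      refine Finset.measurable_sum _ fun l _ => Measurable.mul ?_ (by fun_prop)
      refine (hQ.1 ⟨m, hm⟩ i l).comp ?_
      exact measurable_pi_lambda _ fun b => ih b.1 b.isLt (b.isLt.trans hm)
  exact measurable_pi_lambda _ fun j => this j.1 j.2

lemma lik_cons (Q : QueryMaps N k (t + 1)) (x : Fin N → ℝ) (z : Fin k → ℝ)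
    (r : Fin t → Fin k → ℝ) :
    lik Q x (Fin.cons (α := fun _ => Fin k → ℝ) z r) =
      Real.exp ((first Q *ᵥ x) ⬝ᵥ z - sqNorm (first Q *ᵥ x) / 2) * lik (shift Q z) x r := by
  unfold lik
  rw [← Real.exp_add, Fin.sum_univ_succ]
  have h0 : Q 0 (hist (Fin.cons (α := fun _ => Fin k → ℝ) z r) 0) = first Q := by
    unfold first; congr 1; funext i; exact i.elim0
  have h1 : ∀ j : Fin t, Q j.succ (hist (Fin.cons (α := fun _ => Fin k → ℝ) z r) j.succ)
      = shift Q z j (hist r j) := by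
    intro j
    unfold shift; congr 1; funext i
    refine Fin.cases ?_ (fun b => ?_) i <;> rfl
  simp only [h0, h1, Fin.cons_zero, Fin.cons_succ]

lemma lintegral_pi_cons (F : (Fin (t + 1) → Fin k → ℝ) → ℝ≥0∞) (hF : Measurable F) :
    ∫⁻ r, F r ∂(Measure.pi fun _ : Fin (t + 1) => _root_.stdGaussian (Fin k)) =
      ∫⁻ g, ∫⁻ r, F (Fin.cons (α := fun _ => Fin k → ℝ) g r)
        ∂(Measure.pi fun _ : Fin t => _root_.stdGaussian (Fin k))
        ∂(_root_.stdGaussian (Fin k)) := by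
  have mp := (measurePreserving_piFinSuccAbove
    (fun _ : Fin (t + 1) => _root_.stdGaussian (Fin k)) 0).symm
  rw [← mp.lintegral_comp hF, lintegral_prod _ (by exact (hF.comp mp.measurable).aemeasurable)]
  refine lintegral_congr fun g => lintegral_congr fun r => ?_
  congr 1
  funext j
  refine Fin.cases ?_ (fun b => ?_) j <;> rfl

/-- The transcript of a run on a standard Gaussian input shifted by `x` has density `lik Q x`
with respect to i.i.d. standard Gaussian responses: each round reveals a fresh Gaussian, because
its queries are orthogonal to the earlier ones. -/
theorem lintegral_resp (x : Fin N → ℝ) : ∀ (t : ℕ) (Q : QueryMaps N k t), Q.Valid →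
    ∀ f : (Fin t → Fin k → ℝ) → ℝ≥0∞, Measurable f →
    ∫⁻ a, f (resp Q (a + x)) ∂(_root_.stdGaussian (Fin N)) =
      ∫⁻ r, ENNReal.ofReal (lik Q x r) * f r
        ∂(Measure.pi fun _ : Fin t => _root_.stdGaussian (Fin k)) := by
  intro t
  induction t with
  | zero =>
    intro Q hQ f hf
    have h1 : ∀ r : Fin 0 → Fin k → ℝ, ENNReal.ofReal (lik Q x r) * f r = f Fin.elim0 := by
      intro r
      rw [Subsingleton.elim r Fin.elim0]; simp [lik]
    have h2 : ∀ a, f (resp Q (a + x)) = f Fin.elim0 := fun a => by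
      rw [Subsingleton.elim (resp Q (a + x)) Fin.elim0]
    simp [h1, h2]
  | succ t ih =>
    intro Q hQ f hf
    have hA : first Q * (first Q)ᵀ = 1 := hQ.2.1 0 _
    have hmeas : Measurable fun a => f (resp Q (a + x)) :=
      hf.comp (hQ.measurable_resp.comp (measurable_add_const x))
    rw [lintegral_stdGaussian_split (first Q) hA _ hmeas]
    have hcons : Measurable fun p : (Fin k → ℝ) × (Fin t → Fin k → ℝ) =>
        Fin.cons (α := fun _ => Fin k → ℝ) p.1 p.2 := by
      refine measurable_pi_lambda _ fun j => ?_
      refine Fin.cases ?_ (fun b => ?_) j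
      · exact measurable_fst
      · exact (measurable_pi_apply b).comp measurable_snd
    have hconsg : ∀ g : Fin k → ℝ, Measurable fun r : Fin t → Fin k → ℝ =>
        Fin.cons (α := fun _ => Fin k → ℝ) g r := fun g =>
      Measurable.comp (g := fun p : (Fin k → ℝ) × (Fin t → Fin k → ℝ) =>
        Fin.cons (α := fun _ => Fin k → ℝ) p.1 p.2) hcons (measurable_prodMk_left (x := g))
    -- condition on the first response
    have h1 : ∀ g a, resp Q ((first Q)ᵀ *ᵥ g + (a - (first Q)ᵀ *ᵥ (first Q *ᵥ a)) + x) =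
        Fin.cons (α := fun _ => Fin k → ℝ) (g + first Q *ᵥ x)
          (resp (shift Q (g + first Q *ᵥ x)) (a + x)) := by
      intro g a
      have e : resp Q ((first Q)ᵀ *ᵥ g + (a - (first Q)ᵀ *ᵥ (first Q *ᵥ a)) + x) 0
          = g + first Q *ᵥ x := by
        rw [resp_zero, mulVec_add, mulVec_add, mulVec_sub, mulVec_mulVec, hA, one_mulVec,
          mulVec_mulVec (first Q *ᵥ a), hA, one_mulVec, sub_self, add_zero]
      rw [resp_eq_cons, e]
      congr 1
      have e2 : (first Q)ᵀ *ᵥ g + (a - (first Q)ᵀ *ᵥ (first Q *ᵥ a)) + x =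
          (a + x) + (first Q)ᵀ *ᵥ (g - first Q *ᵥ a) := by
        rw [mulVec_sub]; abel
      rw [e2]
      refine resp_add_orth _ _ _ fun j h' => ?_
      rw [mulVec_mulVec, hQ.shift_mul_first, zero_mulVec]
    simp_rw [h1]
    have h2 : ∀ g, ∫⁻ a, f (Fin.cons (α := fun _ => Fin k → ℝ) g
        (resp (shift Q g) (a + x))) ∂(_root_.stdGaussian (Fin N)) =
        ∫⁻ r, ENNReal.ofReal (lik (shift Q g) x r) * f (Fin.cons (α := fun _ => Fin k → ℝ) g r)
          ∂(Measure.pi fun _ : Fin t => _root_.stdGaussian (Fin k)) := by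
      intro g
      exact ih (shift Q g) (hQ.shift g) (fun r => f (Fin.cons (α := fun _ => Fin k → ℝ) g r))
        (hf.comp (hconsg g))
    simp_rw [h2]
    have hlikm : Measurable fun p : (Fin k → ℝ) × (Fin t → Fin k → ℝ) =>
        ENNReal.ofReal (lik (shift Q p.1) x p.2) := by
      have h3 : ∀ p : (Fin k → ℝ) × (Fin t → Fin k → ℝ), lik (shift Q p.1) x p.2 =
          Real.exp (-((first Q *ᵥ x) ⬝ᵥ p.1 - sqNorm (first Q *ᵥ x) / 2)) *
            lik Q x (Fin.cons (α := fun _ => Fin k → ℝ) p.1 p.2) := by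
        intro p
        rw [lik_cons, ← mul_assoc, ← Real.exp_add, neg_add_cancel, Real.exp_zero, one_mul]
      simp_rw [h3]
      refine ENNReal.measurable_ofReal.comp (Measurable.mul ?_ ?_)
      · unfold dotProduct; fun_prop
      · exact (hQ.measurable_lik_right x).comp hcons
    have hF : Measurable fun g : Fin k → ℝ => ∫⁻ r, ENNReal.ofReal (lik (shift Q g) x r) *
        f (Fin.cons (α := fun _ => Fin k → ℝ) g r)
          ∂(Measure.pi fun _ : Fin t => _root_.stdGaussian (Fin k)) :=
      Measurable.lintegral_prod_right' (f := fun p : (Fin k → ℝ) × (Fin t → Fin k → ℝ) =>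
        ENNReal.ofReal (lik (shift Q p.1) x p.2) * f (Fin.cons (α := fun _ => Fin k → ℝ) p.1 p.2))
        (hlikm.mul (hf.comp hcons))
    rw [lintegral_stdGaussian_add (first Q *ᵥ x) _ hF]
    -- reassemble the first response and the rest into one transcript
    have hG : Measurable fun r : Fin (t + 1) → Fin k → ℝ => ENNReal.ofReal (lik Q x r) * f r :=
      (ENNReal.measurable_ofReal.comp (hQ.measurable_lik_right x)).mul hf
    rw [lintegral_pi_cons _ hG]
    refine lintegral_congr fun g => ?_
    rw [← lintegral_const_mul]
    · refine lintegral_congr fun r => ?_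
      rw [lik_cons, ENNReal.ofReal_mul (Real.exp_pos _).le, mul_assoc]
    · exact (hlikm.comp (measurable_prodMk_left (x := g))).mul (hf.comp (hconsg g))

end QueryMaps

/-! ### Growth of the energy -/

namespace QueryMaps

variable {N k t : ℕ}

/-- The last query matrix as a function of the transcript of all earlier rounds. -/
def lastQuery (Q : QueryMaps N k (t + 1)) (r : Fin t → Fin k → ℝ) : Matrix (Fin k) (Fin N) ℝ :=
  Q (Fin.last t) r

lemma energy_resp_succ (Q : QueryMaps N k (t + 1)) (a x : Fin N → ℝ) :
    energy Q (resp Q a) x = energy (dropLast Q) (resp (dropLast Q) a) x +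
      sqNorm (lastQuery Q (resp (dropLast Q) a) *ᵥ x) := by
  have h : ∀ i : Fin t, resp (dropLast Q) a i = resp Q a i.castSucc :=
    fun i => resp_dropLast Q a i.1 i.2
  unfold energy
  rw [Fin.sum_univ_castSucc]
  congr 1
  · refine Finset.sum_congr rfl fun j _ => ?_
    unfold dropLast
    congr 3
    funext i
    exact (h ⟨i.1, i.isLt.trans j.isLt⟩).symm
  · unfold lastQuery
    congr 3
    funext i
    exact (h i).symm

lemma sqNorm_runMat (Q : QueryMaps N k t) (a x : Fin N → ℝ) :
    sqNorm (runMat Q a *ᵥ x) = energy Q (resp Q a) x := by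
  unfold energy sqNorm
  rw [Fintype.sum_prod_type]
  rfl

lemma Valid.measurable_lastQuery {Q : QueryMaps N k (t + 1)} (hQ : Q.Valid) :
    Measurable fun p : (Fin t → Fin k → ℝ) × (Fin N → ℝ) =>
      sqNorm (lastQuery Q p.1 *ᵥ p.2) := by
  refine measurable_sqNorm.comp (measurable_pi_lambda _ fun i => ?_)
  simp only [mulVec, dotProduct]
  refine Finset.measurable_sum _ fun l _ => Measurable.mul ?_ (by fun_prop)
  exact (hQ.1 (Fin.last t) i l).comp measurable_fst

/-- Truncated second-moment bound: where the energy is at most `B`, the squared likelihood ratio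
at shift `s x` is at most `e^{s² B}` times the likelihood ratio at shift `2 s x`, which integrates
to one; the AM-GM inequality then bounds the ratio itself. -/
lemma lik_le (Q : QueryMaps N k t) (x : Fin N → ℝ) (s B e : ℝ) (r : Fin t → Fin k → ℝ)
    (hB : energy Q r x ≤ B) :
    lik Q (s • x) r ≤ Real.exp (-e) / 2 * lik Q ((2 * s) • x) r +
      Real.exp (s ^ 2 * B + e) / 2 := by
  set X := ∑ j, (Q j (hist r j) *ᵥ x) ⬝ᵥ r j with hX
  have hlik : ∀ c : ℝ, lik Q (c • x) r = Real.exp (c * X - c ^ 2 * energy Q r x / 2) := by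
    intro c
    have hs : ∀ y : Fin k → ℝ, sqNorm (c • y) = c ^ 2 * sqNorm y := by
      intro y; simp [sqNorm, mul_pow, Finset.mul_sum]
    unfold lik energy
    simp only [mulVec_smul, smul_dotProduct, hs, smul_eq_mul]
    congr 1
    rw [Finset.sum_sub_distrib, hX, Finset.mul_sum, Finset.mul_sum, Finset.sum_div]
  rw [hlik, hlik]
  set E := energy Q r x
  set p := Real.exp ((-e + ((2 * s) * X - (2 * s) ^ 2 * E / 2)) / 2) with hp
  set q := Real.exp ((s ^ 2 * B + e) / 2) with hq
  have h1 : Real.exp (-e) * Real.exp ((2 * s) * X - (2 * s) ^ 2 * E / 2) = p ^ 2 := by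
    rw [← Real.exp_add, hp, ← Real.exp_nat_mul]; congr 1; push_cast; ring
  have h2 : Real.exp (s ^ 2 * B + e) = q ^ 2 := by
    rw [hq, ← Real.exp_nat_mul]; congr 1; push_cast; ring
  have h3 : Real.exp (s * X - s ^ 2 * E / 2) ≤ p * q := by
    rw [hp, hq, ← Real.exp_add, Real.exp_le_exp]
    nlinarith [mul_le_mul_of_nonneg_left hB (sq_nonneg s)]
  have h4 : Real.exp (-e) / 2 * Real.exp ((2 * s) * X - (2 * s) ^ 2 * E / 2) = p ^ 2 / 2 := by
    rw [← h1]; ring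
  rw [h4, h2]
  nlinarith [sq_nonneg (p - q)]

lemma lintegral_lik {Q : QueryMaps N k t} (hQ : Q.Valid) (x : Fin N → ℝ) :
    ∫⁻ r, ENNReal.ofReal (lik Q x r)
      ∂(Measure.pi fun _ : Fin t => _root_.stdGaussian (Fin k)) = 1 := by
  have := lintegral_resp x t Q hQ (fun _ => 1) measurable_const
  simpa using this.symm

/-- One round of the argument: while the energy collected so far is at most `B`, the next round
collects more than `4 k + 80 n (s² B + 2 e)` only with probability `e^{-e}`. -/
lemma step_bound {n : ℕ} (hn : 0 < n) {Q : QueryMaps (n * n) k (t + 1)} (hQ : Q.Valid)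
    (s B e : ℝ) :
    ((_root_.stdGaussian (Fin (n * n))).prod
      ((_root_.stdGaussian (Fin n)).prod (_root_.stdGaussian (Fin n))))
      {p | sqNorm p.2.2 ≤ 20 * n ∧
        energy (dropLast Q) (resp (dropLast Q) (p.1 + s • tensor p.2.1 p.2.2))
          (tensor p.2.1 p.2.2) ≤ B ∧
        4 * k + 80 * n * (s ^ 2 * B + 2 * e) <
          sqNorm (lastQuery Q (resp (dropLast Q) (p.1 + s • tensor p.2.1 p.2.2)) *ᵥ
            tensor p.2.1 p.2.2)}
      ≤ ENNReal.ofReal (Real.exp (-e)) := by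
  have hn' : (0 : ℝ) < n := by exact_mod_cast hn
  set b : ℝ := 4 * k + 80 * n * (s ^ 2 * B + 2 * e) with hb
  set W := (_root_.stdGaussian (Fin n)).prod (_root_.stdGaussian (Fin n)) with hW
  set π : Measure (Fin t → Fin k → ℝ) := Measure.pi fun _ => _root_.stdGaussian (Fin k) with hπ
  have hQ' := hQ.dropLast
  -- the event in terms of the transcript and of the hidden vectors
  let F : Set ((Fin t → Fin k → ℝ) × ((Fin n → ℝ) × (Fin n → ℝ))) :=
    {p | sqNorm p.2.2 ≤ 20 * n ∧ b < sqNorm (lastQuery Q p.1 *ᵥ tensor p.2.1 p.2.2)}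
  let T : Set ((Fin t → Fin k → ℝ) × ((Fin n → ℝ) × (Fin n → ℝ))) :=
    {p | energy (dropLast Q) p.1 (tensor p.2.1 p.2.2) ≤ B}
  have hrx : Measurable fun p : (Fin t → Fin k → ℝ) × ((Fin n → ℝ) × (Fin n → ℝ)) =>
      (p.1, tensor p.2.1 p.2.2) := measurable_fst.prodMk (measurable_tensor.comp measurable_snd)
  have hq : Measurable fun p : (Fin t → Fin k → ℝ) × ((Fin n → ℝ) × (Fin n → ℝ)) =>
      sqNorm (lastQuery Q p.1 *ᵥ tensor p.2.1 p.2.2) :=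
    Measurable.comp
      (g := fun p : (Fin t → Fin k → ℝ) × (Fin (n * n) → ℝ) => sqNorm (lastQuery Q p.1 *ᵥ p.2))
      (f := fun p : (Fin t → Fin k → ℝ) × ((Fin n → ℝ) × (Fin n → ℝ)) =>
        (p.1, tensor p.2.1 p.2.2)) hQ.measurable_lastQuery hrx
  have he : Measurable fun p : (Fin t → Fin k → ℝ) × ((Fin n → ℝ) × (Fin n → ℝ)) =>
      energy (dropLast Q) p.1 (tensor p.2.1 p.2.2) :=
    Measurable.comp
      (g := fun p : (Fin t → Fin k → ℝ) × (Fin (n * n) → ℝ) => energy (dropLast Q) p.1 p.2)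
      (f := fun p : (Fin t → Fin k → ℝ) × ((Fin n → ℝ) × (Fin n → ℝ)) =>
        (p.1, tensor p.2.1 p.2.2)) hQ'.measurable_energy hrx
  have hF : MeasurableSet F := by
    have h1 : MeasurableSet {p : (Fin t → Fin k → ℝ) × ((Fin n → ℝ) × (Fin n → ℝ)) |
        sqNorm p.2.2 ≤ 20 * n} :=
      measurableSet_le (measurable_sqNorm.comp (measurable_snd.comp measurable_snd))
        measurable_const
    have h2 : MeasurableSet {p : (Fin t → Fin k → ℝ) × ((Fin n → ℝ) × (Fin n → ℝ)) |
        b < sqNorm (lastQuery Q p.1 *ᵥ tensor p.2.1 p.2.2)} :=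
      measurableSet_lt measurable_const hq
    exact h1.inter h2
  have hT : MeasurableSet T :=
    measurableSet_le he measurable_const
  have hΦ : Measurable fun p : (Fin (n * n) → ℝ) × ((Fin n → ℝ) × (Fin n → ℝ)) =>
      (resp (dropLast Q) (p.1 + s • tensor p.2.1 p.2.2), p.2) := by
    have h1 : Measurable fun p : (Fin (n * n) → ℝ) × ((Fin n → ℝ) × (Fin n → ℝ)) =>
        p.1 + s • tensor p.2.1 p.2.2 :=
      measurable_fst.add ((measurable_tensor.comp measurable_snd).const_smul s)
    exact (hQ'.measurable_resp.comp h1).prodMk measurable_snd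
  have hset : {p : (Fin (n * n) → ℝ) × ((Fin n → ℝ) × (Fin n → ℝ)) | sqNorm p.2.2 ≤ 20 * n ∧
        energy (dropLast Q) (resp (dropLast Q) (p.1 + s • tensor p.2.1 p.2.2))
          (tensor p.2.1 p.2.2) ≤ B ∧
        b < sqNorm (lastQuery Q (resp (dropLast Q) (p.1 + s • tensor p.2.1 p.2.2)) *ᵥ
            tensor p.2.1 p.2.2)} =
      (fun p : (Fin (n * n) → ℝ) × ((Fin n → ℝ) × (Fin n → ℝ)) =>
        (resp (dropLast Q) (p.1 + s • tensor p.2.1 p.2.2), p.2)) ⁻¹' (T ∩ F) := by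
    ext p
    simp only [T, F, Set.mem_ofPred_eq, Set.mem_preimage, Set.mem_inter_iff]
    tauto
  rw [hset, Measure.prod_apply_symm (hΦ (hT.inter hF))]
  -- pass to the transcript law for fixed hidden vectors
  have h1 : ∀ w : (Fin n → ℝ) × (Fin n → ℝ), (_root_.stdGaussian (Fin (n * n)))
      ((fun a => (a, w)) ⁻¹' ((fun p : (Fin (n * n) → ℝ) × ((Fin n → ℝ) × (Fin n → ℝ)) =>
        (resp (dropLast Q) (p.1 + s • tensor p.2.1 p.2.2), p.2)) ⁻¹' (T ∩ F))) =
      ∫⁻ r, ENNReal.ofReal (lik (dropLast Q) (s • tensor w.1 w.2) r) *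
        (T ∩ F).indicator 1 (r, w) ∂π := by
    intro w
    have hind : Measurable fun r : Fin t → Fin k → ℝ =>
        (T ∩ F).indicator (1 : (Fin t → Fin k → ℝ) × ((Fin n → ℝ) × (Fin n → ℝ)) → ℝ≥0∞) (r, w) :=
      (measurable_one.indicator (hT.inter hF)).comp measurable_prodMk_right
    rw [← lintegral_resp (s • tensor w.1 w.2) t (dropLast Q) hQ' _ hind,
      ← lintegral_indicator_one ((measurable_prodMk_right (y := w)) (hΦ (hT.inter hF)))]
    rfl
  simp_rw [h1]
  have h2 : ∀ w : (Fin n → ℝ) × (Fin n → ℝ), ∀ r,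
      ENNReal.ofReal (lik (dropLast Q) (s • tensor w.1 w.2) r) * (T ∩ F).indicator 1 (r, w) ≤
      ENNReal.ofReal (Real.exp (-e) / 2) *
        ENNReal.ofReal (lik (dropLast Q) ((2 * s) • tensor w.1 w.2) r) +
      ENNReal.ofReal (Real.exp (s ^ 2 * B + e) / 2) * F.indicator 1 (r, w) := by
    intro w r
    by_cases h : (r, w) ∈ T ∩ F
    · rw [Set.indicator_of_mem h, Set.indicator_of_mem h.2]
      simp only [Pi.one_apply, mul_one]
      rw [← ENNReal.ofReal_mul (by positivity),
        ← ENNReal.ofReal_add (by unfold lik; positivity) (by positivity)]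
      exact ENNReal.ofReal_le_ofReal (lik_le (dropLast Q) _ s B e r h.1)
    · rw [Set.indicator_of_notMem h, mul_zero]; exact zero_le
  have h3 : ∀ w : (Fin n → ℝ) × (Fin n → ℝ),
      ∫⁻ r, ENNReal.ofReal (lik (dropLast Q) (s • tensor w.1 w.2) r) *
        (T ∩ F).indicator 1 (r, w) ∂π ≤
      ENNReal.ofReal (Real.exp (-e) / 2) +
      ENNReal.ofReal (Real.exp (s ^ 2 * B + e) / 2) * ∫⁻ r, F.indicator 1 (r, w) ∂π := by
    intro w
    have hl : Measurable fun r => ENNReal.ofReal (lik (dropLast Q) ((2 * s) • tensor w.1 w.2) r) :=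
      ENNReal.measurable_ofReal.comp (hQ'.measurable_lik_right _)
    have hFw : Measurable fun r : Fin t → Fin k → ℝ => F.indicator
        (1 : (Fin t → Fin k → ℝ) × ((Fin n → ℝ) × (Fin n → ℝ)) → ℝ≥0∞) (r, w) :=
      (measurable_one.indicator hF).comp measurable_prodMk_right
    refine (lintegral_mono (h2 w)).trans ?_
    rw [lintegral_add_left (hl.const_mul _), lintegral_const_mul _ hl, lintegral_lik hQ', mul_one,
      lintegral_const_mul _ hFw]
  refine (lintegral_mono h3).trans ?_
  have hFm : Measurable fun p : ((Fin n → ℝ) × (Fin n → ℝ)) × (Fin t → Fin k → ℝ) =>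
      F.indicator (1 : (Fin t → Fin k → ℝ) × ((Fin n → ℝ) × (Fin n → ℝ)) → ℝ≥0∞) (p.2, p.1) :=
    (measurable_one.indicator hF).comp measurable_swap
  rw [lintegral_add_left measurable_const, lintegral_const, measure_univ, mul_one,
    lintegral_const_mul _ hFm.lintegral_prod_right',
    lintegral_lintegral_swap hFm.aemeasurable]
  have h4 : ∀ r, ∫⁻ w, F.indicator (1 : (Fin t → Fin k → ℝ) × ((Fin n → ℝ) × (Fin n → ℝ)) → ℝ≥0∞) (r, w) ∂W ≤
      ENNReal.ofReal (Real.exp (-(b - 4 * k) / (80 * n))) := by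
    intro r
    have : ∫⁻ w, F.indicator (1 : (Fin t → Fin k → ℝ) × ((Fin n → ℝ) × (Fin n → ℝ)) → ℝ≥0∞) (r, w) ∂W =
        W {w | sqNorm w.2 ≤ 20 * n ∧ b < sqNorm (lastQuery Q r *ᵥ tensor w.1 w.2)} := by
      rw [← lintegral_indicator_one]
      · rfl
      · exact (measurable_prodMk_left (x := r)) hF
    rw [this]
    exact tensor_tail hn (lastQuery Q r) (hQ.2.1 (Fin.last t) r) b
  refine (add_le_add_right (mul_le_mul_right (lintegral_mono h4) _) _).trans ?_
  rw [lintegral_const, measure_univ, mul_one, ← ENNReal.ofReal_mul (by positivity),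
    ← ENNReal.ofReal_add (by positivity) (by positivity)]
  refine ENNReal.ofReal_le_ofReal (le_of_eq ?_)
  have h5 : -(b - 4 * k) / (80 * n) = -(s ^ 2 * B + 2 * e) := by
    rw [hb]; field_simp; ring
  rw [h5, div_mul_eq_mul_div, ← Real.exp_add]
  have : s ^ 2 * B + e + -(s ^ 2 * B + 2 * e) = -e := by ring
  rw [this]; ring

/-- Iterating `step_bound` along a budget sequence `B`. -/
lemma energy_bound {n : ℕ} (hn : 0 < n) (s : ℝ) (B e : ℕ → ℝ) (hB0 : 0 ≤ B 0)
    (hB : ∀ j, B j + (4 * k + 80 * n * (s ^ 2 * B j + 2 * e j)) ≤ B (j + 1)) :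
    ∀ (t : ℕ) (Q : QueryMaps (n * n) k t), Q.Valid →
    ((_root_.stdGaussian (Fin (n * n))).prod
      ((_root_.stdGaussian (Fin n)).prod (_root_.stdGaussian (Fin n))))
      {p | sqNorm p.2.2 ≤ 20 * n ∧
        B t < energy Q (resp Q (p.1 + s • tensor p.2.1 p.2.2)) (tensor p.2.1 p.2.2)}
      ≤ ∑ j ∈ Finset.range t, ENNReal.ofReal (Real.exp (-(e j))) := by
  intro t
  induction t with
  | zero =>
    intro Q hQ
    have : {p : (Fin (n * n) → ℝ) × ((Fin n → ℝ) × (Fin n → ℝ)) | sqNorm p.2.2 ≤ 20 * n ∧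
        B 0 < energy Q (resp Q (p.1 + s • tensor p.2.1 p.2.2)) (tensor p.2.1 p.2.2)} = ∅ := by
      ext p
      simp [energy, hB0]
    rw [this]; simp
  | succ t ih =>
    intro Q hQ
    rw [Finset.sum_range_succ]
    refine le_trans (measure_mono ?_) ((measure_union_le _ _).trans
      (add_le_add (ih (dropLast Q) hQ.dropLast) (step_bound hn hQ s (B t) (e t))))
    rintro p ⟨hp1, hp2⟩
    rw [energy_resp_succ] at hp2
    by_cases h : energy (dropLast Q) (resp (dropLast Q) (p.1 + s • tensor p.2.1 p.2.2))
          (tensor p.2.1 p.2.2) ≤ B t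
    · exact Or.inr ⟨hp1, h, by linarith [hB t]⟩
    · exact Or.inl ⟨hp1, not_le.1 h⟩

end QueryMaps

lemma measurePreserving_vec (n : ℕ) :
    MeasurePreserving (fun G : Fin n → Fin n → ℝ => _root_.vec n (Matrix.of G))
      (stdGaussianMat n) (_root_.stdGaussian (Fin (n * n))) := by
  have hm : Measurable (fun G : Fin n → Fin n → ℝ => _root_.vec n (Matrix.of G)) := by
    unfold _root_.vec; simp only [of_apply]; fun_prop
  refine ⟨hm, (Measure.pi_eq fun s hs => ?_).symm⟩
  rw [Measure.map_apply hm (MeasurableSet.univ_pi hs)]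
  have : (fun G : Fin n → Fin n → ℝ => _root_.vec n (Matrix.of G)) ⁻¹' (Set.univ.pi s) =
      Set.univ.pi fun i => Set.univ.pi fun j => s (finProdFinEquiv (i, j)) := by
    ext G
    simp only [Set.mem_preimage, Set.mem_pi, Set.mem_univ, forall_true_left, _root_.vec, of_apply]
    constructor
    · intro h i j
      simpa using h (finProdFinEquiv (i, j))
    · intro h l
      have := h (finProdFinEquiv.symm l).1 (finProdFinEquiv.symm l).2
      rwa [Prod.mk.eta, Equiv.apply_symm_apply] at this
  rw [this]
  unfold stdGaussianMat _root_.stdGaussian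
  rw [Measure.pi_pi]
  simp_rw [Measure.pi_pi]
  rw [← finProdFinEquiv.prod_comp, Fintype.prod_prod_type]

lemma sqNorm_tail {n : ℕ} (hn : 0 < n) :
    (_root_.stdGaussian (Fin n)) {v | 20 * (n : ℝ) < sqNorm v} ≤ ENNReal.ofReal (1 / 16) := by
  have hn' : (1 : ℝ) ≤ n := by exact_mod_cast hn
  refine (chernoff _ _ measurable_sqNorm (1 / 4) (20 * n) (by norm_num)).trans ?_
  have h := lintegral_exp_sqNorm_mulVec_le (1 : Matrix (Fin n) (Fin n) ℝ) 1 (1 / 4) (by norm_num)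
    (fun u => by simp) (by norm_num)
  have hf : frobSq (1 : Matrix (Fin n) (Fin n) ℝ) = n := by
    simp [frobSq, Matrix.one_apply]
  simp only [one_mulVec, hf] at h
  refine (mul_le_mul_right h _).trans ?_
  rw [← ENNReal.ofReal_mul (Real.exp_pos _).le, ← Real.exp_add]
  refine ENNReal.ofReal_le_ofReal ?_
  calc Real.exp _ ≤ Real.exp (-(1 : ℝ)) ^ 4 := by
        rw [← Real.exp_nat_mul]; refine Real.exp_le_exp.2 ?_; push_cast; linarith
    _ ≤ (1 / 2) ^ 4 := by
        gcongr
        rw [Real.exp_neg, one_div]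
        gcongr
        linarith [Real.add_one_le_exp (1 : ℝ)]
    _ = 1 / 16 := by norm_num

/-! ### Choice of parameters -/

/-- The budget sequence `B j = k (100 α²)^j` with failure exponents `e j = j + 4` satisfies the
recursion required by `QueryMaps.energy_bound` at signal strength `s = α / √n`. -/
lemma budget_step {n k : ℕ} {α : ℝ} (hn : 0 < n) (hk : n ≤ k) (hα : 10 ≤ α) (j : ℕ) :
    k * (100 * α ^ 2) ^ j + (4 * k + 80 * n * ((α / Real.sqrt n) ^ 2 * (k * (100 * α ^ 2) ^ j) +
      2 * ((j : ℝ) + 4))) ≤ k * (100 * α ^ 2) ^ (j + 1) := by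
  have hn' : (0 : ℝ) < n := by exact_mod_cast hn
  have hk' : (n : ℝ) ≤ k := by exact_mod_cast hk
  have hα2 : (100 : ℝ) ≤ α ^ 2 := by nlinarith
  set P : ℝ := (100 * α ^ 2) ^ j with hP
  have hP1 : 1 ≤ P := one_le_pow₀ (by linarith)
  have hPj : (j : ℝ) + 4 ≤ 4 * P := by
    have h := one_add_mul_le_pow (a := 100 * α ^ 2 - 1) (by linarith) j
    rw [add_sub_cancel] at h
    nlinarith [Nat.cast_nonneg (α := ℝ) j]
  have hs : (n : ℝ) * (α / Real.sqrt n) ^ 2 = α ^ 2 := by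
    rw [div_pow, Real.sq_sqrt hn'.le]; field_simp
  have h1 : 80 * (n : ℝ) * ((α / Real.sqrt n) ^ 2 * (k * P) + 2 * ((j : ℝ) + 4)) =
      80 * α ^ 2 * (k * P) + 160 * (n * ((j : ℝ) + 4)) := by
    rw [← hs]; ring
  have h2 : (n : ℝ) * ((j : ℝ) + 4) ≤ k * (4 * P) := by gcongr
  have h3 : (k : ℝ) ≤ k * P := le_mul_of_one_le_right (by linarith) hP1
  have h4 : 100 * (k * P) ≤ α ^ 2 * (k * P) := by gcongr
  have h5 : 0 ≤ (k : ℝ) * P := by positivity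
  rw [h1, pow_succ (100 * α ^ 2) j, ← hP]
  nlinarith

lemma sum_exp_le (t : ℕ) :
    ∑ j ∈ Finset.range t, ENNReal.ofReal (Real.exp (-((j : ℝ) + 4))) ≤ ENNReal.ofReal (1 / 8) := by
  rw [← ENNReal.ofReal_sum_of_nonneg fun _ _ => (Real.exp_pos _).le]
  refine ENNReal.ofReal_le_ofReal ?_
  have hhalf : Real.exp (-(1 : ℝ)) ≤ 1 / 2 := by
    rw [Real.exp_neg, one_div]
    gcongr
    linarith [Real.add_one_le_exp (1 : ℝ)]
  have h : ∀ j : ℕ, Real.exp (-((j : ℝ) + 4)) ≤ (1 / 2) ^ j * (1 / 16) := by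
    intro j
    have : Real.exp (-((j : ℝ) + 4)) = Real.exp (-(1 : ℝ)) ^ (j + 4) := by
      rw [← Real.exp_nat_mul]; congr 1; push_cast; ring
    rw [this]
    calc Real.exp (-(1 : ℝ)) ^ (j + 4) ≤ (1 / 2) ^ (j + 4) := by gcongr
      _ = (1 / 2) ^ j * (1 / 16) := by rw [pow_add]; norm_num
  refine (Finset.sum_le_sum fun j _ => h j).trans ?_
  rw [← Finset.sum_mul]
  have := sum_geometric_two_le t
  linarith

/-- For at least one round, the bound on `t` makes the final budget at most `n² / 100`. -/
lemma budget_final {n k t : ℕ} {α : ℝ} (hn : 3 ≤ n) (hk : n ≤ k) (hα : 10 ≤ α) (ht0 : 0 < t)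
    (ht : (t : ℝ) ≤ 1 / 8 * Real.log ((n : ℝ) ^ 2 / k) /
      (Real.log (Real.log n) + Real.log α)) :
    k * (100 * α ^ 2) ^ t ≤ (n : ℝ) ^ 2 / 100 := by
  have hn' : (3 : ℝ) ≤ n := by exact_mod_cast hn
  have hk0 : (0 : ℝ) < k := by
    have : (n : ℝ) ≤ k := by exact_mod_cast hk
    linarith
  have ht1 : (1 : ℝ) ≤ t := by exact_mod_cast ht0
  have hloglog : 0 ≤ Real.log (Real.log n) := by
    refine Real.log_nonneg ?_
    rw [Real.le_log_iff_exp_le (by linarith)]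
    linarith [Real.exp_one_lt_d9]
  set l := Real.log α with hl
  set L := Real.log ((n : ℝ) ^ 2 / k) with hL
  have h10 : Real.log 10 ≤ l := Real.log_le_log (by norm_num) hα
  have h10' : 0 < Real.log 10 := Real.log_pos (by norm_num)
  have hmul : (t : ℝ) * (Real.log (Real.log n) + l) ≤ 1 / 8 * L :=
    (le_div_iff₀ (by linarith)).1 ht
  have htl : (t : ℝ) * l ≤ 1 / 8 * L := by nlinarith
  have h100 : Real.log 100 = 2 * Real.log 10 := by
    rw [show (100 : ℝ) = 10 ^ 2 by norm_num, Real.log_pow]; norm_num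
  have hα0 : (0 : ℝ) < α := by linarith
  have hD : Real.log (100 * α ^ 2) ≤ 4 * l := by
    rw [Real.log_mul (by norm_num) (by positivity), Real.log_pow, h100]
    push_cast; linarith
  have hmain : Real.log (100 * (100 * α ^ 2) ^ t) ≤ L := by
    rw [Real.log_mul (by norm_num) (by positivity), Real.log_pow, h100]
    have h1 : (t : ℝ) * Real.log (100 * α ^ 2) ≤ t * (4 * l) := by gcongr
    have h2 : l ≤ t * l := le_mul_of_one_le_left (by linarith) ht1
    linarith
  have h := (Real.log_le_log_iff (by positivity) (by positivity)).1 hmain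
  rw [le_div_iff₀ hk0] at h
  linarith

/-- For few rounds, the squared projection of the plant `u ⊗ v` onto the query space
stays small with probability at least `4/5`. -/
theorem rank_one_plant_small_projection :
    ∃ (c : ℝ) (n₀ : ℕ), 0 < c ∧
      ∀ (n k t : ℕ) (α : ℝ), n₀ ≤ n → n ≤ k → 10 ≤ α →
      ∀ Q : QueryMaps (n * n) k t, Q.Valid →
      (t : ℝ) ≤ c * Real.log ((n : ℝ) ^ 2 / k) /
          (Real.log (Real.log n) + Real.log α) →
      (4 / 5 : ℝ≥0∞) ≤
        ((stdGaussianMat n).prod ((stdGaussian (Fin n)).prod (stdGaussian (Fin n))))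
          {p | sqNorm ((QueryMaps.runMat Q
                  (vec n (Matrix.of p.1) +
                    (α / Real.sqrt n) • tensor p.2.1 p.2.2)).mulVec
                (tensor p.2.1 p.2.2))
              ≤ (n : ℝ) ^ 2 / 100} := by
  refine ⟨1 / 8, 3, by norm_num, fun n k t α hn hk hα Q hQ ht => ?_⟩
  have hn0 : 0 < n := by omega
  rcases Nat.eq_zero_or_pos t with rfl | ht0
  · -- no queries: the projection vanishes
    have huniv : {p : (Fin n → Fin n → ℝ) × ((Fin n → ℝ) × (Fin n → ℝ)) |
        sqNorm ((QueryMaps.runMat Q (_root_.vec n (Matrix.of p.1) +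
          (α / Real.sqrt n) • tensor p.2.1 p.2.2)).mulVec (tensor p.2.1 p.2.2))
            ≤ (n : ℝ) ^ 2 / 100} = Set.univ := by
      refine Set.eq_univ_of_forall fun p => ?_
      simp only [Set.mem_ofPred_eq, QueryMaps.sqNorm_runMat, QueryMaps.energy,
        Finset.univ_eq_empty, Finset.sum_empty]
      positivity
    rw [huniv, measure_univ]
    exact ENNReal.div_le_of_le_mul (by norm_num)
  set B : ℕ → ℝ := fun j => k * (100 * α ^ 2) ^ j with hB
  set e : ℕ → ℝ := fun j => (j : ℝ) + 4 with he
  set s : ℝ := α / Real.sqrt n with hs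
  set W := (_root_.stdGaussian (Fin n)).prod (_root_.stdGaussian (Fin n)) with hW
  set S : Set ((Fin n → Fin n → ℝ) × ((Fin n → ℝ) × (Fin n → ℝ))) :=
    {p | sqNorm ((QueryMaps.runMat Q (_root_.vec n (Matrix.of p.1) +
      s • tensor p.2.1 p.2.2)).mulVec (tensor p.2.1 p.2.2)) ≤ (n : ℝ) ^ 2 / 100} with hS
  have hfin : B t ≤ (n : ℝ) ^ 2 / 100 := budget_final hn hk hα ht0 ht
  -- the two bad events: `‖v‖²` is large, or the energy exceeds its budget
  set E₁ : Set ((Fin n → Fin n → ℝ) × ((Fin n → ℝ) × (Fin n → ℝ))) :=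
    {p | 20 * (n : ℝ) < sqNorm p.2.2} with hE₁
  set E₂ : Set ((Fin (n * n) → ℝ) × ((Fin n → ℝ) × (Fin n → ℝ))) :=
    {p | sqNorm p.2.2 ≤ 20 * n ∧
      B t < QueryMaps.energy Q (QueryMaps.resp Q (p.1 + s • tensor p.2.1 p.2.2))
        (tensor p.2.1 p.2.2)} with hE₂
  have hpres : MeasurePreserving (Prod.map (fun G : Fin n → Fin n → ℝ =>
      _root_.vec n (Matrix.of G)) (id : (Fin n → ℝ) × (Fin n → ℝ) → _))
      ((stdGaussianMat n).prod W) ((_root_.stdGaussian (Fin (n * n))).prod W) :=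
    (measurePreserving_vec n).prod (MeasurePreserving.id W)
  have h1 : ((stdGaussianMat n).prod W) E₁ ≤ ENNReal.ofReal (1 / 16) := by
    have hE : E₁ = Set.univ ×ˢ (Set.univ ×ˢ {v : Fin n → ℝ | 20 * (n : ℝ) < sqNorm v}) := by
      ext p; simp [hE₁]
    rw [hE, Measure.prod_prod, hW, Measure.prod_prod, measure_univ, measure_univ, one_mul, one_mul]
    exact sqNorm_tail hn0
  have h2 : ((stdGaussianMat n).prod W) (Prod.map (fun G : Fin n → Fin n → ℝ =>
      _root_.vec n (Matrix.of G)) id ⁻¹' E₂) ≤ ENNReal.ofReal (1 / 8) := by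
    refine (Measure.le_map_apply hpres.measurable.aemeasurable E₂).trans ?_
    rw [hpres.map_eq]
    refine (QueryMaps.energy_bound hn0 s B e ?_ ?_ t Q hQ).trans (sum_exp_le t)
    · simp [hB]
    · exact budget_step hn0 hk hα
  have hcompl : Sᶜ ⊆ E₁ ∪ (Prod.map (fun G : Fin n → Fin n → ℝ =>
      _root_.vec n (Matrix.of G)) id ⁻¹' E₂) := by
    intro p hp
    rw [hS, Set.mem_compl_iff, Set.mem_ofPred_eq, QueryMaps.sqNorm_runMat, not_le] at hp
    by_cases h : 20 * (n : ℝ) < sqNorm p.2.2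
    · exact Or.inl h
    · exact Or.inr ⟨not_lt.1 h, hfin.trans_lt hp⟩
  have hbad : ((stdGaussianMat n).prod W) Sᶜ ≤ ENNReal.ofReal (1 / 5) := by
    refine ((measure_mono hcompl).trans (measure_union_le _ _)).trans ((add_le_add h1 h2).trans ?_)
    rw [← ENNReal.ofReal_add (by norm_num) (by norm_num)]
    exact ENNReal.ofReal_le_ofReal (by norm_num)
  have hone : 1 ≤ ((stdGaussianMat n).prod W) S + ((stdGaussianMat n).prod W) Sᶜ := by
    rw [← measure_univ (μ := (stdGaussianMat n).prod W), ← Set.union_compl_self S]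
    exact measure_union_le _ _
  have h45 : (4 / 5 : ℝ≥0∞) + ENNReal.ofReal (1 / 5) = 1 := by
    have : (4 / 5 : ℝ≥0∞) = ENNReal.ofReal (4 / 5) := by
      rw [ENNReal.ofReal_div_of_pos (by norm_num)]; norm_num
    rw [this, ← ENNReal.ofReal_add (by norm_num) (by norm_num)]; norm_num
  refine (ENNReal.add_le_add_iff_right (ENNReal.ofReal_ne_top (r := 1 / 5))).1 ?_
  rw [h45]
  exact hone.trans (add_le_add_right hbad _)

end
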